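/- arXiv:2102.13358 — 7 statements merged into one kernel-verified Lean document; each statement's English description precedes it below -/
import Mathlib

section
/- Let S be a real symmetric traceless 3×3 matrix, and set s = tr(S²) and t = tr(S³). Then 6t² ≤ s³. -/
open Matrix

/-! For a traceless `3 × 3` matrix `S`, the difference `tr (S ^ 2) ^ 3 - 6 * tr (S ^ 3) ^ 2` is
twice the discriminant of the characteristic polynomial. When all the eigenvalues lie in the ordered
base ring, as they do for a real symmetric matrix, this discriminant is the square of the product of
their differences, hence nonnegative. -/

open Polynomial

section Discriminant

variable {R : Type*} [CommRing R]

theorem discr_C_mul_prod_X_sub_C {a : R} (ha : a ≠ 0) (x y z : R) :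
    (C a * (X - C x) * (X - C y) * (X - C z)).discr =
      (a ^ 2 * ((x - y) * (x - z) * (y - z))) ^ 2 := by
  rw [Cubic.C_mul_prod_X_sub_C_eq, discr_of_degree_eq_three (Cubic.degree_of_a_ne_zero ha)]
  simp only [Cubic.coeff_eq_a, Cubic.coeff_eq_b, Cubic.coeff_eq_c, Cubic.coeff_eq_d]
  ring

theorem isSquare_discr_of_splits_of_degree_eq_three [IsDomain R] {f : R[X]} (hf : f.Splits)
    (hdeg : f.degree = 3) : IsSquare f.discr := by
  obtain ⟨x, y, z, hroots⟩ : ∃ x y z, f.roots = {x, y, z} := by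
    rw [← Multiset.card_eq_three, ← hf.natDegree_eq_card_roots, natDegree_eq_of_degree_eq_some hdeg]
  have hfactor : f = C f.leadingCoeff * (X - C x) * (X - C y) * (X - C z) := by
    simpa [hroots, mul_assoc] using hf.eq_prod_roots
  have hlead : f.leadingCoeff ≠ 0 := leadingCoeff_ne_zero.mpr fun h ↦ by simp [h] at hdeg
  rw [hfactor, discr_C_mul_prod_X_sub_C hlead]
  exact IsSquare.sq _

end Discriminant

section FinThree

variable {R : Type*} [CommRing R] (M : Matrix (Fin 3) (Fin 3) R)

theorem charpoly_fin_three :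
    M.charpoly = X ^ 3 - C M.trace * X ^ 2 + C M.adjugate.trace * X - C M.det := by
  rw [charpoly, det_fin_three, det_fin_three, trace_fin_three, adjugate_fin_three,
    trace_fin_three_of]
  simp only [charmatrix_apply_eq, charmatrix_apply_ne, ne_eq, Fin.reduceEq, not_false_eq_true,
    C_add, C_sub, C_mul]
  ring

theorem discr_fin_three :
    M.discr = M.trace ^ 2 * M.adjugate.trace ^ 2 - 4 * M.adjugate.trace ^ 3
      - 4 * M.trace ^ 3 * M.det - 27 * M.det ^ 2
      + 18 * M.trace * M.adjugate.trace * M.det := by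
  nontriviality R
  have hcubic : M.charpoly = (Cubic.mk 1 (-M.trace) M.adjugate.trace (-M.det)).toPoly := by
    simp [charpoly_fin_three, Cubic.toPoly, sub_eq_add_neg]
  rw [Matrix.discr, discr_of_degree_eq_three M.charpoly_degree_eq_dim, hcubic]
  simp only [Cubic.coeff_eq_a, Cubic.coeff_eq_b, Cubic.coeff_eq_c, Cubic.coeff_eq_d]
  ring

theorem trace_pow_two_fin_three : (M ^ 2).trace = M.trace ^ 2 - 2 * M.adjugate.trace := by
  rw [adjugate_fin_three, trace_fin_three_of, trace_fin_three, trace_fin_three]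
  simp only [sq, mul_apply, Fin.sum_univ_three]
  ring

theorem pow_three_fin_three :
    M ^ 3 = M.trace • M ^ 2 - M.adjugate.trace • M + M.det • 1 := by
  have cayley_hamilton := M.aeval_self_charpoly
  simp only [charpoly_fin_three, aeval_sub, aeval_add, aeval_mul, aeval_C, aeval_X_pow, aeval_X,
    Algebra.algebraMap_eq_smul_one, smul_one_mul] at cayley_hamilton
  rw [← sub_eq_zero, ← cayley_hamilton]
  abel

theorem trace_pow_three_fin_three :
    (M ^ 3).trace = M.trace * (M ^ 2).trace - M.adjugate.trace * M.trace + 3 * M.det := by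
  rw [pow_three_fin_three]
  simp [mul_comm]

variable {M}

theorem two_mul_discr_of_trace_eq_zero (hM : M.trace = 0) :
    2 * M.discr = (M ^ 2).trace ^ 3 - 6 * (M ^ 3).trace ^ 2 := by
  rw [discr_fin_three, trace_pow_three_fin_three, trace_pow_two_fin_three, hM]
  ring

end FinThree

theorem six_t_sq_le_s_cubed_general {R : Type*} [CommRing R] [LinearOrder R] [IsStrictOrderedRing R]
    {S : Matrix (Fin 3) (Fin 3) R} (hsplits : S.charpoly.Splits) (hS : S.trace = 0) :
    6 * (S ^ 3).trace ^ 2 ≤ (S ^ 2).trace ^ 3 := by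
  have hdiscr : 0 ≤ S.discr :=
    (isSquare_discr_of_splits_of_degree_eq_three hsplits S.charpoly_degree_eq_dim).nonneg
  linarith [two_mul_discr_of_trace_eq_zero hS]

theorem six_t_sq_le_s_cubed (S : Matrix (Fin 3) (Fin 3) ℝ) (hsymm : S.IsSymm)
    (hS : S.trace = 0) (s t : ℝ) (hs : s = (S ^ 2).trace) (ht : t = (S ^ 3).trace) :
    6 * t ^ 2 ≤ s ^ 3 := by
  subst hs ht
  exact six_t_sq_le_s_cubed_general (isHermitian_iff_isSymm.mpr hsymm).splits_charpoly hS
end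

section
/- Let S be a real symmetric traceless 3×3 matrix, and set s = tr(S²) and t = tr(S³). Then S has three pairwise distinct real eigenvalues if and only if 6t² ≠ s³. -/
open Matrix

/-! The quantity `s³ - 6t²` is twice the discriminant of the characteristic polynomial. For
`tr S = 0` this polynomial is a depressed cubic `X³ + pX + q` with `(tr S)² - tr(S²) = 2p`, and the
trace of the Cayley–Hamilton identity is `tr(S³) + p tr S + 3q = 0`. Hence `s = -2p`, `t = -3q`
and `s³ - 6t² = 2(-4p³ - 27q²)`. A polynomial that splits has a nonzero discriminant exactly when
its roots are distinct, and the characteristic polynomial of a real symmetric matrix splits. -/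

section Discriminant

open Polynomial

lemma isUnit_discr_iff_separable {R : Type*} [CommRing R] {f : R[X]} (hf : f.Monic) :
    IsUnit f.discr ↔ f.Separable := by
  nontriviality R
  rcases f.natDegree.eq_zero_or_pos with hdeg | hdeg
  · obtain rfl := eq_one_of_monic_natDegree_zero hf hdeg
    simpa only [← C_1, discr_C, isUnit_one, true_iff] using separable_one
  -- In positive characteristic the derivative can have degree below `f.natDegree - 1`; raising its
  -- formal degree only multiplies the resultant by powers of the leading coefficient of `f`.
  have hres : f.resultant f.derivative f.natDegree (f.natDegree - 1) =
      f.resultant f.derivative := by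
    obtain ⟨k, hk⟩ := Nat.exists_eq_add_of_le (natDegree_derivative_le f)
    rw [hk, resultant_add_right_deg _ _ _ _ _ le_rfl, coeff_natDegree, hf.leadingCoeff, one_pow,
      one_mul]
  have hdiscr := resultant_deriv (natDegree_pos_iff_degree_pos.mp hdeg)
  rw [hres, hf.leadingCoeff, mul_one] at hdiscr
  rw [separable_def, ← isUnit_resultant_iff_isCoprime hf, hdiscr, IsUnit.mul_iff,
    and_iff_right (isUnit_neg_one.pow _)]

lemma discr_ne_zero_iff_nodup_roots {K : Type*} [Field K] {f : K[X]} (hf : f.Monic)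
    (hsplits : f.Splits) : f.discr ≠ 0 ↔ f.roots.Nodup := by
  rw [← isUnit_iff_ne_zero, isUnit_discr_iff_separable hf,
    nodup_roots_iff_of_splits hf.ne_zero hsplits]

end Discriminant

lemma nodup_iff_of_card_eq_three {α : Type*} {m : Multiset α} (hm : m.card = 3) :
    m.Nodup ↔ ∃ a b c, a ≠ b ∧ a ≠ c ∧ b ≠ c ∧ m = {a, b, c} := by
  constructor
  · intro hnodup
    obtain ⟨a, b, c, rfl⟩ := Multiset.card_eq_three.mp hm
    exact ⟨a, b, c, by simp_all, by simp_all, by simp_all, rfl⟩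
  · rintro ⟨a, b, c, hab, hac, hbc, rfl⟩
    simp [hab, hac, hbc]

section FinThree

open Polynomial

variable {R : Type*} [CommRing R] (A : Matrix (Fin 3) (Fin 3) R)

lemma charpoly_fin_three_s6 :
    A.charpoly = X ^ 3 - C A.trace * X ^ 2 + C A.adjugate.trace * X - C A.det := by
  rw [Matrix.charpoly, det_fin_three, A.det_fin_three, adjugate_fin_three]
  simp only [charmatrix_apply_eq, ne_eq, Fin.reduceEq, not_false_eq_true, charmatrix_apply_ne,
    trace_fin_three, map_add, map_sub, map_mul, of_apply, cons_val]
  ring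

lemma two_mul_trace_adjugate_fin_three :
    2 * A.adjugate.trace = A.trace ^ 2 - (A ^ 2).trace := by
  simp only [adjugate_fin_three, trace_fin_three, pow_two, mul_apply, Fin.sum_univ_three, of_apply,
    cons_val]
  ring

lemma trace_pow_three_fin_three_s6 :
    (A ^ 3).trace = A.trace * (A ^ 2).trace - A.adjugate.trace * A.trace + 3 * A.det := by
  have hCH : A ^ 3 - A.trace • A ^ 2 + A.adjugate.trace • A - A.det • 1 = 0 := by
    simpa [charpoly_fin_three_s6, Algebra.algebraMap_eq_smul_one] using A.aeval_self_charpoly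
  have htrace := congrArg trace hCH
  simp only [trace_sub, trace_add, trace_smul, smul_eq_mul, trace_one, Fintype.card_fin,
    Nat.cast_ofNat, trace_zero] at htrace
  linear_combination htrace

variable {A} in
lemma two_mul_discr_fin_three_of_trace_eq_zero (hA : A.trace = 0) :
    2 * A.discr = (A ^ 2).trace ^ 3 - 6 * (A ^ 3).trace ^ 2 := by
  nontriviality R
  have hsq : (A ^ 2).trace = -2 * A.adjugate.trace := by
    linear_combination two_mul_trace_adjugate_fin_three A + A.trace * hA
  have hcube : (A ^ 3).trace = 3 * A.det := by
    rw [trace_pow_three_fin_three_s6, hA]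
    ring
  have hdiscr : A.discr = -4 * A.adjugate.trace ^ 3 - 27 * A.det ^ 2 := by
    rw [Matrix.discr, discr_of_degree_eq_three (by simp [charpoly_degree_eq_dim])]
    simp [charpoly_fin_three_s6, hA, coeff_X]
  rw [hsq, hcube, hdiscr]
  ring

end FinThree

theorem distinct_eigenvalues_iff_algebraically_general_general {K : Type*} [Field K]
    [NeZero (2 : K)] (S : Matrix (Fin 3) (Fin 3) K) (hsplits : S.charpoly.Splits)
    (hS : S.trace = 0) (s t : K) (hs : s = (S ^ 2).trace) (ht : t = (S ^ 3).trace) :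
    (∃ a b c : K, a ≠ b ∧ a ≠ c ∧ b ≠ c ∧ S.charpoly.roots = {a, b, c}) ↔
      6 * t ^ 2 ≠ s ^ 3 := by
  have hcard : S.charpoly.roots.card = 3 := by
    rw [← hsplits.natDegree_eq_card_roots, S.charpoly_natDegree_eq_dim, Fintype.card_fin]
  have hdiscr : 2 * S.discr = s ^ 3 - 6 * t ^ 2 := by
    rw [hs, ht]
    exact two_mul_discr_fin_three_of_trace_eq_zero hS
  calc (∃ a b c : K, a ≠ b ∧ a ≠ c ∧ b ≠ c ∧ S.charpoly.roots = {a, b, c})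
    _ ↔ S.charpoly.roots.Nodup := (nodup_iff_of_card_eq_three hcard).symm
    _ ↔ S.discr ≠ 0 := (discr_ne_zero_iff_nodup_roots S.charpoly_monic hsplits).symm
    _ ↔ s ^ 3 - 6 * t ^ 2 ≠ 0 := by rw [← hdiscr, mul_ne_zero_iff_left two_ne_zero]
    _ ↔ 6 * t ^ 2 ≠ s ^ 3 := by rw [sub_ne_zero, ne_comm]

theorem distinct_eigenvalues_iff_algebraically_general (S : Matrix (Fin 3) (Fin 3) ℝ)
    (hsymm : S.IsSymm) (hS : S.trace = 0)
    (s t : ℝ) (hs : s = (S ^ 2).trace) (ht : t = (S ^ 3).trace) :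
    (∃ a b c : ℝ, a ≠ b ∧ a ≠ c ∧ b ≠ c ∧ S.charpoly.roots = {a, b, c}) ↔
      6 * t ^ 2 ≠ s ^ 3 :=
  distinct_eigenvalues_iff_algebraically_general_general S
    (isHermitian_iff_isSymm.mpr hsymm).splits_charpoly hS s t hs ht
end

section
/- Let S be a nonzero real symmetric traceless 3×3 matrix, and set s = tr(S²) and t = tr(S³). Assume 6t² = s³ and s ≠ 0. Then t ≠ 0, and S has exactly two distinct eigenvalues: 2t/s, whose eigenspace is one-dimensional, and −t/s, whose eigenspace is two-dimensional. -/
open Matrix Module Polynomial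

/-! Write `a = -t/s`. By Newton's identities the hypothesis `6t² = s³` says that the characteristic
polynomial of `S` is `(X - a)² (X + 2a)`. A Hermitian matrix satisfies
`ker (S - a)² = ker (S - a)`, so Cayley–Hamilton improves to `(S - a) (S + 2a) = 0`. Hence
`(S + 2a) / 3a` and `-(S - a) / 3a` are the projections onto the two eigenspaces, and their traces
are the dimensions. -/

section Eigenspace

variable {R M : Type*} [CommRing R] [AddCommGroup M] [Module R M] {f : End R M} {a b : R}

lemma hasEigenvalue_of_finrank_eigenspace_ne_zero [Nontrivial R]
    (h : finrank R (f.eigenspace a) ≠ 0) : f.HasEigenvalue a := by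
  rw [End.hasEigenvalue_iff]
  intro hbot
  exact h (hbot ▸ finrank_bot R M)

lemma eq_or_eq_of_hasEigenvalue_of_sub_mul_sub_eq_zero [IsDomain R] [IsTorsionFree R M] {μ : R}
    (hf : (f - algebraMap R (End R M) a) * (f - algebraMap R (End R M) b) = 0)
    (hμ : f.HasEigenvalue μ) : μ = a ∨ μ = b := by
  obtain ⟨v, hv⟩ := hμ.exists_hasEigenvector
  have hroot : ((X - C a) * (X - C b)).eval μ • v = 0 := by
    rw [← End.aeval_apply_of_hasEigenvector hv]
    simp only [map_mul, map_sub, aeval_X, aeval_C, hf, LinearMap.zero_apply]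
  simpa [hv.2, sub_eq_zero] using hroot

end Eigenspace

section Projection

variable {K V : Type*} [Field K] [AddCommGroup V] [Module K V] {f : End K V} {a b : K}

lemma isProj_eigenspace_of_sub_mul_sub_eq_zero (hab : a ≠ b)
    (hf : (f - algebraMap K (End K V) a) * (f - algebraMap K (End K V) b) = 0) :
    LinearMap.IsProj (f.eigenspace a) ((a - b)⁻¹ • (f - algebraMap K (End K V) b)) where
  map_mem v := by
    rw [End.eigenspace_def]
    exact Submodule.smul_mem _ _ (LinearMap.congr_fun hf v)
  map_id v hv := by
    rw [LinearMap.smul_apply, LinearMap.sub_apply, End.mem_eigenspace_iff.mp hv,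
      algebraMap_end_apply, ← sub_smul, inv_smul_smul₀ (sub_ne_zero.mpr hab)]

lemma finrank_eigenspace_eq_of_trace_eq [CharZero K] [FiniteDimensional K V] {m n : ℕ}
    (hab : a ≠ b) (hf : (f - algebraMap K (End K V) a) * (f - algebraMap K (End K V) b) = 0)
    (hV : finrank K V = m + n) (htr : LinearMap.trace K V f = m * a + n * b) :
    finrank K (f.eigenspace a) = m := by
  have hsub : a - b ≠ 0 := sub_ne_zero.mpr hab
  apply Nat.cast_injective (R := K)
  calc (finrank K (f.eigenspace a) : K)
      = (a - b)⁻¹ * (LinearMap.trace K V f - b * finrank K V) := by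
        rw [← (isProj_eigenspace_of_sub_mul_sub_eq_zero hab hf).trace,
          Algebra.algebraMap_eq_smul_one]
        simp only [map_smul, map_sub, LinearMap.trace_one, smul_eq_mul]
    _ = m := by
        rw [hV, htr]
        push_cast
        field_simp
        ring

end Projection

lemma sub_algebraMap_mul_comm {R A : Type*} [CommRing R] [Ring A] [Algebra R A] (x : A) (a b : R) :
    (x - algebraMap R A a) * (x - algebraMap R A b) =
      (x - algebraMap R A b) * (x - algebraMap R A a) :=
  (((Commute.refl x).sub_left (Algebra.commute_algebraMap_left a x)).sub_right
    (Algebra.commute_algebraMap_right b _)).eq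

/-- Newton's identities express the elementary symmetric functions of the eigenvalues through the
power sums `tr (S ^ k)`; the factor `6` clears the denominators. -/
lemma six_mul_charpoly_fin_three {R : Type*} [CommRing R] (S : Matrix (Fin 3) (Fin 3) R) :
    6 * S.charpoly = 6 * X ^ 3 - 6 * C S.trace * X ^ 2
      + 3 * C (S.trace ^ 2 - (S ^ 2).trace) * X
      - C (S.trace ^ 3 - 3 * S.trace * (S ^ 2).trace + 2 * (S ^ 3).trace) := by
  simp only [charpoly, det_fin_three, charmatrix_apply, diagonal_apply, pow_succ, pow_zero, one_mul,
    trace_fin_three, mul_apply, Fin.sum_univ_three, Fin.isValue, Fin.reduceEq, if_true, if_false,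
    map_add, map_sub, map_mul, map_ofNat, zero_sub]
  ring

lemma charpoly_eq_of_six_mul_sq_eq_cube {K : Type*} [Field K] [CharZero K]
    {S : Matrix (Fin 3) (Fin 3) K} {s t : K} (hS : S.trace = 0) (hs : s = (S ^ 2).trace)
    (ht : t = (S ^ 3).trace) (hspec : 6 * t ^ 2 = s ^ 3) (hsne : s ≠ 0) :
    S.charpoly = (X - C (-t / s)) ^ 2 * (X - C (2 * t / s)) := by
  obtain ⟨a, ha⟩ : ∃ a, -t / s = a := ⟨_, rfl⟩
  have hb : 2 * t / s = -2 * a := by rw [← ha]; ring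
  have hs_eq : s = 6 * a ^ 2 := by rw [← ha]; field_simp; linear_combination -hspec
  have ht_eq : t = -6 * a ^ 3 := by
    calc t = -a * s := by rw [← ha]; field_simp
      _ = -6 * a ^ 3 := by rw [hs_eq]; ring
  apply mul_left_cancel₀ (OfNat.ofNat_ne_zero 6 : (6 : K[X]) ≠ 0)
  rw [six_mul_charpoly_fin_three, hS, ← hs, ← ht, ha, hb, hs_eq, ht_eq]
  simp only [map_add, map_sub, map_mul, map_neg, map_pow, map_ofNat, map_zero]
  ring

lemma isSelfAdjoint_trace_of_isHermitian {R n : Type*} [AddCommMonoid R] [StarAddMonoid R]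
    [Fintype n] {S : Matrix n n R} (hS : S.IsHermitian) : IsSelfAdjoint S.trace := by
  rw [IsSelfAdjoint, ← trace_conjTranspose, hS.eq]

section Hermitian

variable {n R : Type*} [Fintype n] [DecidableEq n] [CommRing R] [NoZeroDivisors R] [PartialOrder R]
  [StarRing R] [StarOrderedRing R] {S : Matrix n n R} {a b : R}

lemma sub_mul_eq_zero_of_sub_sq_mul_eq_zero {m : Type*} {B : Matrix n m R} (hS : S.IsHermitian)
    (ha : IsSelfAdjoint a) (h : (S - algebraMap R _ a) ^ 2 * B = 0) :
    (S - algebraMap R _ a) * B = 0 := by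
  have hSa : (S - algebraMap R _ a).IsHermitian := hS.sub (ha.algebraMap _)
  rwa [← conjTranspose_mul_self_mul_eq_zero, hSa.eq, ← sq]

lemma toLin'_sub_mul_sub_eq_zero_of_charpoly_eq (hS : S.IsHermitian) (ha : IsSelfAdjoint a)
    (h : S.charpoly = (X - C a) ^ 2 * (X - C b)) :
    (toLin' S - algebraMap R (End R (n → R)) a) * (toLin' S - algebraMap R (End R (n → R)) b) =
      0 := by
  have hcayley : (S - algebraMap R _ a) ^ 2 * (S - algebraMap R _ b) = 0 := by
    simpa [h] using S.aeval_self_charpoly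
  have hquad := sub_mul_eq_zero_of_sub_sq_mul_eq_zero hS ha hcayley
  have hlin := congrArg toLinAlgEquiv' hquad
  rwa [map_mul, map_sub, map_sub, AlgEquiv.commutes, AlgEquiv.commutes, map_zero] at hlin

end Hermitian

theorem algebraically_special_eigenstructure_general {K : Type*} [Field K] [PartialOrder K]
    [StarRing K] [StarOrderedRing K] (S : Matrix (Fin 3) (Fin 3) K) (hherm : S.IsHermitian)
    (hS : S.trace = 0) (s t : K) (hs : s = (S ^ 2).trace) (ht : t = (S ^ 3).trace)
    (hspec : 6 * t ^ 2 = s ^ 3) (hsne : s ≠ 0) :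
    t ≠ 0 ∧
    2 * t / s ≠ -t / s ∧
    Module.End.HasEigenvalue (Matrix.toLin' S) (2 * t / s) ∧
    Module.End.HasEigenvalue (Matrix.toLin' S) (-t / s) ∧
    (∀ μ : K, Module.End.HasEigenvalue (Matrix.toLin' S) μ → μ = 2 * t / s ∨ μ = -t / s) ∧
    Module.finrank K (Module.End.eigenspace (Matrix.toLin' S) (2 * t / s)) = 1 ∧
    Module.finrank K (Module.End.eigenspace (Matrix.toLin' S) (-t / s)) = 2 := by
  have htne : t ≠ 0 := by
    rintro rfl
    exact pow_ne_zero 3 hsne (by simpa using hspec.symm)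
  have hne : 2 * t / s ≠ -t / s := fun h => htne <| by
    linear_combination (div_left_inj' hsne).mp h / 3
  have ha : IsSelfAdjoint (-t / s) :=
    (ht ▸ isSelfAdjoint_trace_of_isHermitian (hherm.pow 3)).neg.div
      (hs ▸ isSelfAdjoint_trace_of_isHermitian (hherm.pow 2))
  have hdouble := toLin'_sub_mul_sub_eq_zero_of_charpoly_eq hherm ha
    (charpoly_eq_of_six_mul_sq_eq_cube hS hs ht hspec hsne)
  have hsimple := (sub_algebraMap_mul_comm _ _ _).trans hdouble
  have hdim_simple : finrank K (End.eigenspace (toLin' S) (2 * t / s)) = 1 :=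
    finrank_eigenspace_eq_of_trace_eq (n := 2) hne hsimple (by simp)
      (by rw [trace_toLin'_eq, hS]; push_cast; ring)
  have hdim_double : finrank K (End.eigenspace (toLin' S) (-t / s)) = 2 :=
    finrank_eigenspace_eq_of_trace_eq (n := 1) hne.symm hdouble (by simp)
      (by rw [trace_toLin'_eq, hS]; push_cast; ring)
  exact ⟨htne, hne, hasEigenvalue_of_finrank_eigenspace_ne_zero (by simp [hdim_simple]),
    hasEigenvalue_of_finrank_eigenspace_ne_zero (by simp [hdim_double]),
    fun _ => eq_or_eq_of_hasEigenvalue_of_sub_mul_sub_eq_zero hsimple, hdim_simple, hdim_double⟩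

theorem algebraically_special_eigenstructure (S : Matrix (Fin 3) (Fin 3) ℝ)
    (hS0 : S ≠ 0) (hsymm : S.IsSymm) (hS : S.trace = 0)
    (s t : ℝ) (hs : s = (S ^ 2).trace) (ht : t = (S ^ 3).trace)
    (hspec : 6 * t ^ 2 = s ^ 3) (hsne : s ≠ 0) :
    t ≠ 0 ∧
    2 * t / s ≠ -t / s ∧
    Module.End.HasEigenvalue (Matrix.toLin' S) (2 * t / s) ∧
    Module.End.HasEigenvalue (Matrix.toLin' S) (-t / s) ∧
    (∀ μ : ℝ, Module.End.HasEigenvalue (Matrix.toLin' S) μ → μ = 2 * t / s ∨ μ = -t / s) ∧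
    Module.finrank ℝ (Module.End.eigenspace (Matrix.toLin' S) (2 * t / s)) = 1 ∧
    Module.finrank ℝ (Module.End.eigenspace (Matrix.toLin' S) (-t / s)) = 2 :=
  algebraically_special_eigenstructure_general S (isHermitian_iff_isSymm.mpr hsymm) hS s t hs ht
    hspec hsne
end

section
/- Let R be a real symmetric 3×3 matrix, r = tr(R), S = R − (r/3)·I, s = tr(S²) and t = tr(S³). Assume 6t² = s³ and s ≠ 0, and let u be a unit eigenvector of S for the eigenvalue 2t/s. Then R = (r/3 + 2t/s)·u uᵀ + (r/3 − t/s)·(I − u uᵀ), i.e., R decomposes spectrally as α·u⊗u + β·h with α = r/3 + 2t/s, β = r/3 − t/s and h = I − u⊗u. -/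
open Matrix

/-!
For a star projection `P` with `A * P = l • P`, the Hermitian matrix
`D = A - l • P - m • (1 - P)` satisfies
`tr (D * D) = tr (A * A) - l² tr P - 2 m (tr A - l tr P) + m² tr (1 - P)`.
Hence the first two traces of `A` can force `tr (D * D) = 0`, that is `D = 0`; this is the equality
case of the Cauchy–Schwarz inequality for the eigenvalues of `A` off the range of `P`.
For a traceless `S` in dimension `d`, the relation `d (d - 1) t² = (d - 2)² s³` says exactly that
`s = d (d - 1) m²` with `m = t / ((d - 2) s)`, which is the required value of the second trace when
`(d - 1) m` is an eigenvalue of `S`.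
-/

section SpectralDecomposition

variable {n 𝕜 : Type*} [Fintype n]

theorem isStarProjection_vecMulVec_star [CommSemiring 𝕜] [StarRing 𝕜] {u : n → 𝕜}
    (hu : star u ⬝ᵥ u = 1) : IsStarProjection (vecMulVec u (star u)) where
  isIdempotentElem := by
    rw [IsIdempotentElem, vecMulVec_mul_vecMulVec, hu, one_smul]
  isSelfAdjoint := by
    rw [IsSelfAdjoint, star_eq_conjTranspose, conjTranspose_vecMulVec, star_star]

theorem isSelfAdjoint_trace [AddCommMonoid 𝕜] [StarAddMonoid 𝕜] {A : Matrix n n 𝕜}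
    (hA : A.IsHermitian) : IsSelfAdjoint A.trace := by
  rw [IsSelfAdjoint, ← trace_conjTranspose, hA.eq]

variable [DecidableEq n]

theorem trace_sub_trace_div_card_smul_one [Field 𝕜] (A : Matrix n n 𝕜)
    (hn : (Fintype.card n : 𝕜) ≠ 0) :
    (A - (A.trace / Fintype.card n) • (1 : Matrix n n 𝕜)).trace = 0 := by
  rw [trace_sub, trace_smul, trace_one, smul_eq_mul, div_mul_cancel₀ _ hn, sub_self]

theorem eq_smul_add_smul_one_sub_of_trace_eq [CommRing 𝕜] [NoZeroDivisors 𝕜] [PartialOrder 𝕜]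
    [StarRing 𝕜] [StarOrderedRing 𝕜] {A P : Matrix n n 𝕜} (hA : A.IsHermitian)
    (hP : IsStarProjection P) {l m : 𝕜} (hm : IsSelfAdjoint m) (hAP : A * P = l • P)
    (htr : A.trace = l * P.trace + m * (1 - P).trace)
    (htr_sq : (A ^ 2).trace = l ^ 2 * P.trace + m ^ 2 * (1 - P).trace) :
    A = l • P + m • (1 - P) := by
  have hPP : P * P = P := hP.isIdempotentElem
  have hPH : P.IsHermitian := hP.isSelfAdjoint.isHermitian
  have hlP : (l • P).IsHermitian := by
    have hPAP : P * A * Pᴴ = l • P := by rw [hPH.eq, mul_assoc, hAP, mul_smul_comm, hPP]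
    exact hPAP ▸ isHermitian_mul_mul_conjTranspose P hA
  set D := A - (l • P + m • (1 - P)) with hDdef
  have hD : D.IsHermitian := hA.sub (hlP.add ((isHermitian_one.sub hPH).smul hm))
  have hPA : (P * A).trace = l * P.trace := by
    rw [trace_mul_comm, hAP, trace_smul, smul_eq_mul]
  have hDD : (D * D).trace = (A ^ 2).trace - l ^ 2 * P.trace
      - 2 * m * (A.trace - l * P.trace) + m ^ 2 * (1 - P).trace := by
    simp only [hDdef, sq A, add_mul, sub_mul, mul_add, mul_sub, smul_mul_assoc, mul_smul_comm,
      smul_sub, mul_one, one_mul, hPP, hAP, hPA, trace_add, trace_sub, trace_smul, smul_eq_mul]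
    ring
  have hDD_zero : (Dᴴ * D).trace = 0 := by
    rw [hD.eq, hDD, htr, htr_sq]
    ring
  exact sub_eq_zero.mp (trace_conjTranspose_mul_self_eq_zero_iff.mp hDD_zero)

theorem eq_smul_vecMulVec_add_smul_one_sub_of_trace_eq [CommRing 𝕜] [NoZeroDivisors 𝕜]
    [PartialOrder 𝕜] [StarRing 𝕜] [StarOrderedRing 𝕜] {A : Matrix n n 𝕜} (hA : A.IsHermitian)
    {u : n → 𝕜} (hu : star u ⬝ᵥ u = 1) {l m : 𝕜} (hm : IsSelfAdjoint m) (heig : A *ᵥ u = l • u)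
    (htr : A.trace = l + m * (Fintype.card n - 1))
    (htr_sq : (A ^ 2).trace = l ^ 2 + m ^ 2 * (Fintype.card n - 1)) :
    A = l • vecMulVec u (star u) + m • (1 - vecMulVec u (star u)) := by
  have htrP : (vecMulVec u (star u)).trace = 1 := by
    rw [trace_vecMulVec, dotProduct_comm, hu]
  apply eq_smul_add_smul_one_sub_of_trace_eq hA (isStarProjection_vecMulVec_star hu) hm
  · rw [mul_vecMulVec, heig, smul_vecMulVec]
  · rw [trace_sub, trace_one, htrP, htr, mul_one]
  · rw [trace_sub, trace_one, htrP, htr_sq, mul_one]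

theorem eq_smul_vecMulVec_sub_smul_one_sub_of_trace_eq_zero [Field 𝕜] [PartialOrder 𝕜]
    [StarRing 𝕜] [StarOrderedRing 𝕜] (hn : Fintype.card n ≠ 2) {S : Matrix n n 𝕜}
    (hS : S.IsHermitian) (htr : S.trace = 0)
    {s t : 𝕜} (hs : s = (S ^ 2).trace) (ht : t = (S ^ 3).trace)
    (hspec : Fintype.card n * (Fintype.card n - 1) * t ^ 2 = (Fintype.card n - 2) ^ 2 * s ^ 3)
    (hs_ne : s ≠ 0) {u : n → 𝕜} (hu : star u ⬝ᵥ u = 1)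
    (heig : S *ᵥ u = ((Fintype.card n - 1) * t / ((Fintype.card n - 2) * s)) • u) :
    S = ((Fintype.card n - 1) * t / ((Fintype.card n - 2) * s)) • vecMulVec u (star u) -
        (t / ((Fintype.card n - 2) * s)) • (1 - vecMulVec u (star u)) := by
  have : IsStrictOrderedRing 𝕜 := IsOrderedRing.toIsStrictOrderedRing 𝕜
  have hcard : (Fintype.card n : 𝕜) - 2 ≠ 0 := sub_ne_zero.mpr (by exact_mod_cast hn)
  have hcard_sa : IsSelfAdjoint (Fintype.card n : 𝕜) := .natCast _
  have hs_sa : IsSelfAdjoint s := hs ▸ isSelfAdjoint_trace (hS.pow 2)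
  have ht_sa : IsSelfAdjoint t := ht ▸ isSelfAdjoint_trace (hS.pow 3)
  have hratio_sa : IsSelfAdjoint (t / ((Fintype.card n - 2) * s)) :=
    ht_sa.div ((hcard_sa.sub (.ofNat 2)).mul hs_sa)
  have hs_eq : s = Fintype.card n * (Fintype.card n - 1) *
      (t / ((Fintype.card n - 2) * s)) ^ 2 := by
    field_simp
    linear_combination -hspec
  rw [mul_div_assoc] at heig ⊢
  rw [sub_eq_add_neg, ← neg_smul]
  apply eq_smul_vecMulVec_add_smul_one_sub_of_trace_eq hS hu hratio_sa.neg heig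
  · rw [htr]
    ring
  · rw [← hs]
    linear_combination hs_eq

theorem ricci_spectral_decomposition_general [Field 𝕜] [PartialOrder 𝕜] [StarRing 𝕜]
    [StarOrderedRing 𝕜] (hn : Fintype.card n ≠ 2) {R : Matrix n n 𝕜} (hR : R.IsHermitian)
    {r : 𝕜} (hr : r = R.trace) {S : Matrix n n 𝕜}
    (hS : S = R - (r / Fintype.card n) • (1 : Matrix n n 𝕜))
    {s t : 𝕜} (hs : s = (S ^ 2).trace) (ht : t = (S ^ 3).trace)
    (hspec : Fintype.card n * (Fintype.card n - 1) * t ^ 2 = (Fintype.card n - 2) ^ 2 * s ^ 3)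
    (hs_ne : s ≠ 0) {u : n → 𝕜} (hu : star u ⬝ᵥ u = 1)
    (heig : S *ᵥ u = ((Fintype.card n - 1) * t / ((Fintype.card n - 2) * s)) • u) :
    R = (r / Fintype.card n + (Fintype.card n - 1) * t / ((Fintype.card n - 2) * s)) •
          vecMulVec u (star u) +
        (r / Fintype.card n - t / ((Fintype.card n - 2) * s)) •
          ((1 : Matrix n n 𝕜) - vecMulVec u (star u)) := by
  have hcard : (Fintype.card n : 𝕜) ≠ 0 := by
    intro h
    simp [h, hs_ne] at hspec
  have hr_sa : IsSelfAdjoint r := hr ▸ isSelfAdjoint_trace hR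
  have hS_herm : S.IsHermitian := hS ▸ hR.sub (isHermitian_one.smul (hr_sa.div (.natCast _)))
  have hS_trace : S.trace = 0 := by
    rw [hS, hr]
    exact trace_sub_trace_div_card_smul_one R hcard
  have hS_eq := eq_smul_vecMulVec_sub_smul_one_sub_of_trace_eq_zero hn hS_herm hS_trace hs ht hspec
    hs_ne hu heig
  rw [eq_add_of_sub_eq hS.symm, hS_eq]
  module

end SpectralDecomposition

theorem ricci_spectral_decomposition (R : Matrix (Fin 3) (Fin 3) ℝ)
    (hsymm : R.IsSymm) (r : ℝ) (hr : r = R.trace)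
    (S : Matrix (Fin 3) (Fin 3) ℝ) (hSdef : S = R - (r / 3) • (1 : Matrix (Fin 3) (Fin 3) ℝ))
    (s t : ℝ) (hs : s = (S ^ 2).trace) (ht : t = (S ^ 3).trace)
    (hspec : 6 * t ^ 2 = s ^ 3) (hsne : s ≠ 0)
    (u : Fin 3 → ℝ) (hu : u ⬝ᵥ u = 1) (heig : S.mulVec u = (2 * t / s) • u) :
    R = (r / 3 + 2 * t / s) • vecMulVec u u +
        (r / 3 - t / s) • ((1 : Matrix (Fin 3) (Fin 3) ℝ) - vecMulVec u u) := by
  have three_sub_one : (3 : ℝ) - 1 = 2 := by norm_num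
  have three_sub_two : (3 : ℝ) - 2 = 1 := by norm_num
  have three_mul_two : (3 : ℝ) * 2 = 6 := by norm_num
  simpa [three_sub_one, three_sub_two] using ricci_spectral_decomposition_general (n := Fin 3)
    (u := u) (by simp) (isHermitian_iff_isSymm.mpr hsymm) hr (by simpa using hSdef) hs ht
    (by simpa [three_sub_one, three_sub_two, three_mul_two] using hspec) hsne (by simpa using hu)
    (by simpa [three_sub_one, three_sub_two] using heig)
end

section
/- Let S be a real symmetric traceless 3×3 matrix with s = tr(S²) and t = tr(S³), assume 6t² = s³ and s ≠ 0, and set h = (1/t)·(2S³ − (4/3)·s·S). Then h is symmetric, h² = h, tr(h) = 2, and S·h = h·S = (−t/s)·h. -/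
open Matrix

/-!
Put `μ = -t / s`. The condition `6 t² = s³` says that `s = 6 μ²` and `t = -6 μ³`, so the
Cayley–Hamilton theorem for the traceless matrix `S` factors as `(S - μ)² (S + 2 μ) = 0`. Since
`S - μ` is Hermitian, its square has the same kernel, whence `(S - μ) (S + 2 μ) = 0`. Modulo the
cubic relation, `h` is the Lagrange basis polynomial `(S + 2 μ) / (3 μ)`, which projects onto the
eigenspace of `μ`.
-/

section Eigenprojection

variable {K A : Type*} [Field K] [Ring A] [Algebra K A]

/-- The projection onto the eigenspace of `μ` along that of `ν`, for an element `x` with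
`(x - μ) * (x - ν) = 0`: the Lagrange basis polynomial of the nodes `μ`, `ν` at `μ`, evaluated at
`x`. It takes the junk value `0` when `μ = ν`. -/
def eigenprojection (x : A) (μ ν : K) : A :=
  (μ - ν)⁻¹ • (x - algebraMap K A ν)

theorem commute_eigenprojection (x : A) (μ ν : K) : Commute x (eigenprojection x μ ν) :=
  ((Commute.refl x).sub_right (Algebra.commute_algebraMap_right ν x)).smul_right _

theorem mul_eigenprojection {x : A} {μ ν : K}
    (hx : (x - algebraMap K A μ) * (x - algebraMap K A ν) = 0) :
    x * eigenprojection x μ ν = μ • eigenprojection x μ ν := by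
  rw [sub_mul, sub_eq_zero, ← Algebra.smul_def] at hx
  rw [eigenprojection, mul_smul_comm, hx, smul_comm]

theorem isIdempotentElem_eigenprojection {x : A} {μ ν : K} (hne : μ ≠ ν)
    (hx : (x - algebraMap K A μ) * (x - algebraMap K A ν) = 0) :
    IsIdempotentElem (eigenprojection x μ ν) := by
  set p := eigenprojection x μ ν with hp
  calc p * p = (μ - ν)⁻¹ • (x * p - ν • p) := by
        nth_rw 1 [hp, eigenprojection]
        rw [smul_mul_assoc, sub_mul, ← Algebra.smul_def]
    _ = (μ - ν)⁻¹ • ((μ - ν) • p) := by rw [mul_eigenprojection hx, sub_smul]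
    _ = p := inv_smul_smul₀ (sub_ne_zero.mpr hne) p

theorem isSelfAdjoint_eigenprojection [StarRing K] [StarRing A] [StarModule K A] {x : A} {μ ν : K}
    (hx : IsSelfAdjoint x) (hμ : IsSelfAdjoint μ) (hν : IsSelfAdjoint ν) :
    IsSelfAdjoint (eigenprojection x μ ν) :=
  (hμ.sub hν).inv₀.smul (hx.sub (hν.algebraMap A))

theorem trace_eigenprojection {n : Type*} [Fintype n] [DecidableEq n] (M : Matrix n n K)
    (μ ν : K) :
    (eigenprojection M μ ν).trace = (M.trace - Fintype.card n * ν) / (μ - ν) := by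
  simp [eigenprojection, algebraMap_eq_diagonal, div_eq_inv_mul]

end Eigenprojection

theorem mul_eq_zero_of_isHermitian_of_mul_self_mul_eq_zero {m n R : Type*} [Fintype m]
    [NonUnitalRing R] [PartialOrder R] [StarRing R] [StarOrderedRing R] [NoZeroDivisors R]
    {A : Matrix m m R} (hA : A.IsHermitian) {B : Matrix m n R} (h : A * A * B = 0) :
    A * B = 0 := by
  rwa [← conjTranspose_mul_self_mul_eq_zero, hA.eq]

theorem isSelfAdjoint_trace_s11 {n R : Type*} [Fintype n] [AddCommMonoid R] [StarAddMonoid R]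
    {M : Matrix n n R} (hM : M.IsHermitian) : IsSelfAdjoint M.trace := by
  rw [isSelfAdjoint_iff, ← trace_conjTranspose, hM.eq]

/-- Cayley–Hamilton, with Newton's identities used to write the coefficients as power traces. -/
theorem six_smul_pow_three_fin_three {R : Type*} [CommRing R] (M : Matrix (Fin 3) (Fin 3) R) :
    (6 : R) • M ^ 3 = (6 * M.trace) • M ^ 2 - (3 * (M.trace ^ 2 - (M ^ 2).trace)) • M
      + (M.trace ^ 3 - 3 * M.trace * (M ^ 2).trace + 2 * (M ^ 3).trace) • 1 := by
  ext i j
  fin_cases i <;> fin_cases j <;>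
    simp [pow_succ, trace_fin_three, mul_apply, Fin.sum_univ_three] <;> ring

theorem pow_three_eq_of_trace_eq_zero {K : Type*} [Field K] [CharZero K]
    {M : Matrix (Fin 3) (Fin 3) K} (hM : M.trace = 0) :
    M ^ 3 = ((M ^ 2).trace / 2) • M + ((M ^ 3).trace / 3) • 1 := by
  have h6 := congr_arg ((6 : K)⁻¹ • ·) (six_smul_pow_three_fin_three M)
  simp only [hM] at h6
  rw [inv_smul_smul₀ (by norm_num)] at h6
  conv_lhs => rw [h6]
  module

theorem eq_six_mul_pow_of_six_mul_sq_eq_pow_three {K : Type*} [Field K] {s t : K}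
    (hst : 6 * t ^ 2 = s ^ 3) (hs : s ≠ 0) :
    s = 6 * (-t / s) ^ 2 ∧ t = -6 * (-t / s) ^ 3 := by
  constructor
  · field_simp
    linear_combination -hst
  · field_simp
    linear_combination -t * hst

theorem pow_three_eq_of_trace_pow {K : Type*} [Field K] [CharZero K]
    {M : Matrix (Fin 3) (Fin 3) K} {μ : K} (hM : M.trace = 0)
    (h2 : (M ^ 2).trace = 6 * μ ^ 2) (h3 : (M ^ 3).trace = -6 * μ ^ 3) :
    M ^ 3 = (3 * μ ^ 2) • M - (2 * μ ^ 3) • 1 := by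
  rw [pow_three_eq_of_trace_eq_zero hM, h2, h3]
  module

theorem sub_mul_self_mul_sub_eq_zero {R A : Type*} [CommRing R] [Ring A] [Algebra R A] {x : A}
    {μ : R} (hx : x ^ 3 = (3 * μ ^ 2) • x - (2 * μ ^ 3) • 1) :
    (x - algebraMap R A μ) * (x - algebraMap R A μ) * (x - algebraMap R A (-2 * μ)) = 0 := by
  simp only [Algebra.algebraMap_eq_smul_one]
  have expand : (x - μ • 1) * (x - μ • 1) * (x - (-2 * μ) • 1)
      = x ^ 3 - ((3 * μ ^ 2) • x - (2 * μ ^ 3) • 1) := by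
    simp only [pow_three', sub_mul, mul_sub, smul_mul_assoc, mul_smul_comm, mul_one, one_mul]
    module
  rw [expand, hx, sub_self]

/-- The polynomial concomitant of `x` with parameters `s = tr(x²)` and `t = tr(x³)`, called `h` in
the theorem. The parameters are left free, so that it makes sense in any algebra; it takes the junk
value `0` when `t = 0`. -/
def concomitant {K A : Type*} [Field K] [Ring A] [Algebra K A] (x : A) (s t : K) : A :=
  (1 / t) • ((2 : K) • x ^ 3 - (4 / 3 * s) • x)

theorem concomitant_eq_eigenprojection {K A : Type*} [Field K] [CharZero K] [Ring A]
    [Algebra K A] {x : A} {μ : K} (hμ : μ ≠ 0)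
    (hx : x ^ 3 = (3 * μ ^ 2) • x - (2 * μ ^ 3) • 1) :
    concomitant x (6 * μ ^ 2) (-6 * μ ^ 3) = eigenprojection x μ (-2 * μ) := by
  rw [concomitant, hx, eigenprojection, Algebra.algebraMap_eq_smul_one,
    show μ - -2 * μ = 3 * μ by ring]
  match_scalars <;> field_simp <;> ring

theorem projector_properties_general {K : Type*} [Field K] [PartialOrder K] [StarRing K]
    [StarOrderedRing K] (S : Matrix (Fin 3) (Fin 3) K) (hherm : S.IsHermitian)
    (hS : S.trace = 0) (s t : K) (hs : s = (S ^ 2).trace) (ht : t = (S ^ 3).trace)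
    (hspec : 6 * t ^ 2 = s ^ 3) (hsne : s ≠ 0) :
    (concomitant S s t).IsHermitian ∧ IsIdempotentElem (concomitant S s t) ∧
      (concomitant S s t).trace = 2 ∧ Commute S (concomitant S s t) ∧
      S * concomitant S s t = (-t / s) • concomitant S s t := by
  obtain ⟨hsμ, htμ⟩ := eq_six_mul_pow_of_six_mul_sq_eq_pow_three hspec hsne
  have hμ_adj : IsSelfAdjoint (-t / s) := by
    rw [ht, hs]
    exact (isSelfAdjoint_trace_s11 (hherm.pow 3)).neg.div (isSelfAdjoint_trace_s11 (hherm.pow 2))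
  generalize -t / s = μ at *
  have hμ : μ ≠ 0 := by
    rintro rfl
    simp [hsμ] at hsne
  have hne : μ ≠ -2 * μ := fun h ↦ hμ (by linear_combination h / 3)
  have hcubic := pow_three_eq_of_trace_pow hS (hs.symm.trans hsμ) (ht.symm.trans htμ)
  have hquad : (S - algebraMap K _ μ) * (S - algebraMap K _ (-2 * μ)) = 0 :=
    mul_eq_zero_of_isHermitian_of_mul_self_mul_eq_zero
      (hherm.isSelfAdjoint.sub (hμ_adj.algebraMap _)) (sub_mul_self_mul_sub_eq_zero hcubic)
  have htrace : (eigenprojection S μ (-2 * μ)).trace = 2 := by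
    rw [trace_eigenprojection, hS, div_eq_iff (sub_ne_zero.mpr hne), Fintype.card_fin]
    push_cast
    ring
  rw [hsμ, htμ, concomitant_eq_eigenprojection hμ hcubic]
  exact ⟨isSelfAdjoint_eigenprojection hherm hμ_adj ((IsSelfAdjoint.ofNat 2).neg.mul hμ_adj),
    isIdempotentElem_eigenprojection hne hquad, htrace,
    commute_eigenprojection S μ _, mul_eigenprojection hquad⟩

theorem projector_properties (S : Matrix (Fin 3) (Fin 3) ℝ)
    (hsymm : S.IsSymm) (hS : S.trace = 0)
    (s t : ℝ) (hs : s = (S ^ 2).trace) (ht : t = (S ^ 3).trace)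
    (hspec : 6 * t ^ 2 = s ^ 3) (hsne : s ≠ 0)
    (h : Matrix (Fin 3) (Fin 3) ℝ)
    (hdef : h = (1 / t) • ((2 : ℝ) • S ^ 3 - (4 / 3 * s) • S)) :
    h.IsSymm ∧ h * h = h ∧ h.trace = 2 ∧ S * h = h * S ∧ S * h = (-t / s) • h := by
  rw [← isHermitian_iff_isSymm] at hsymm ⊢
  exact hdef ▸ projector_properties_general S hsymm hS s t hs ht hspec hsne
end

section
/- Let u be a unit vector in ℝ³ and v a nonzero vector in ℝ³ with ⟨u, v⟩ = 0. Set h = I − u uᵀ and A = 2·v vᵀ − ‖v‖²·h. Then A is symmetric and traceless, and A·v = ‖v‖²·v, A·(u × v) = −‖v‖²·(u × v), A·u = 0; in particular A has the three pairwise distinct eigenvalues ‖v‖², −‖v‖², 0. -/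
open Matrix

/-!
On `u` the projection `h` vanishes and so does `v ⊗ v`; on the plane orthogonal to `u` the
projection is the identity, so there `A = 2 v ⊗ v - ‖v‖²` is `‖v‖²` times the reflection fixing `v`
and negating its orthogonal complement in that plane. By Lagrange's identity
`‖u × v‖² = ‖u‖² ‖v‖² - ⟨u, v⟩² = ‖v‖²`, so `u × v` is a nonzero vector of that complement.
-/

theorem ne_zero_of_dotProduct_self_ne_zero {n R : Type*} [Fintype n]
    [NonUnitalNonAssocSemiring R] {x : n → R} (hx : x ⬝ᵥ x ≠ 0) : x ≠ 0 := by
  rintro rfl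
  exact hx (zero_dotProduct 0)

section AnyDimension

variable {n R : Type*} [DecidableEq n] [CommRing R]

/-- The tensor `h = 1 - u ⊗ u`, which for a unit vector `u` is the orthogonal projection onto the
hyperplane orthogonal to `u`. -/
def hyperplaneProjection (u : n → R) : Matrix n n R :=
  1 - vecMulVec u u

theorem isSymm_hyperplaneProjection (u : n → R) : (hyperplaneProjection u).IsSymm :=
  isSymm_one.sub (transpose_vecMulVec u u)

variable [Fintype n]

theorem trace_hyperplaneProjection (u : n → R) :
    (hyperplaneProjection u).trace = Fintype.card n - u ⬝ᵥ u := by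
  rw [hyperplaneProjection, trace_sub, trace_one, trace_vecMulVec]

theorem hyperplaneProjection_mulVec (u x : n → R) :
    hyperplaneProjection u *ᵥ x = x - (u ⬝ᵥ x) • u := by
  rw [hyperplaneProjection, sub_mulVec, one_mulVec, vecMulVec_mulVec, op_smul_eq_smul]

theorem hyperplaneProjection_mulVec_self {u : n → R} (hu : u ⬝ᵥ u = 1) :
    hyperplaneProjection u *ᵥ u = 0 := by
  rw [hyperplaneProjection_mulVec, hu, one_smul, sub_self]

theorem hyperplaneProjection_mulVec_of_dotProduct_eq_zero {u x : n → R} (hux : u ⬝ᵥ x = 0) :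
    hyperplaneProjection u *ᵥ x = x := by
  rw [hyperplaneProjection_mulVec, hux, zero_smul, sub_zero]

/-- The auxiliary tensor `A = 2 v ⊗ v - ‖v‖² h`, with `‖v‖²` written as `v ⬝ᵥ v` so that it makes
sense over any commutative ring. It is meant for a unit vector `u` and a vector `v` orthogonal to
`u`. -/
def auxiliaryTensor (u v : n → R) : Matrix n n R :=
  (2 : R) • vecMulVec v v - (v ⬝ᵥ v) • hyperplaneProjection u

theorem isSymm_auxiliaryTensor (u v : n → R) : (auxiliaryTensor u v).IsSymm :=
  (IsSymm.smul (transpose_vecMulVec v v) 2).sub ((isSymm_hyperplaneProjection u).smul (v ⬝ᵥ v))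

theorem trace_auxiliaryTensor {u : n → R} (hu : u ⬝ᵥ u = 1) (v : n → R) :
    (auxiliaryTensor u v).trace = (3 - Fintype.card n) * (v ⬝ᵥ v) := by
  rw [auxiliaryTensor, trace_sub, trace_smul, trace_smul, trace_vecMulVec,
    trace_hyperplaneProjection, hu, smul_eq_mul, smul_eq_mul]
  ring

theorem auxiliaryTensor_mulVec (u v x : n → R) :
    auxiliaryTensor u v *ᵥ x =
      (2 * (v ⬝ᵥ x)) • v - (v ⬝ᵥ v) • (hyperplaneProjection u *ᵥ x) := by
  rw [auxiliaryTensor, sub_mulVec, smul_mulVec, smul_mulVec, vecMulVec_mulVec, op_smul_eq_smul,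
    smul_smul]

theorem auxiliaryTensor_mulVec_right {u v : n → R} (huv : u ⬝ᵥ v = 0) :
    auxiliaryTensor u v *ᵥ v = (v ⬝ᵥ v) • v := by
  rw [auxiliaryTensor_mulVec, hyperplaneProjection_mulVec_of_dotProduct_eq_zero huv, ← sub_smul,
    two_mul, add_sub_cancel_right]

theorem auxiliaryTensor_mulVec_of_dotProduct_eq_zero {u v x : n → R} (hux : u ⬝ᵥ x = 0)
    (hvx : v ⬝ᵥ x = 0) : auxiliaryTensor u v *ᵥ x = (-(v ⬝ᵥ v)) • x := by
  rw [auxiliaryTensor_mulVec, hyperplaneProjection_mulVec_of_dotProduct_eq_zero hux, hvx,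
    mul_zero, zero_smul, zero_sub, neg_smul]

theorem auxiliaryTensor_mulVec_left {u v : n → R} (hu : u ⬝ᵥ u = 1) (huv : u ⬝ᵥ v = 0) :
    auxiliaryTensor u v *ᵥ u = 0 := by
  rw [auxiliaryTensor_mulVec, hyperplaneProjection_mulVec_self hu, dotProduct_comm v u, huv,
    mul_zero, zero_smul, smul_zero, sub_zero]

theorem hasEigenvalue_toLin'_of_mulVec_eq_smul {A : Matrix n n R} {μ : R} {x : n → R}
    (hx : x ≠ 0) (hAx : A *ᵥ x = μ • x) : Module.End.HasEigenvalue (toLin' A) μ :=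
  Module.End.hasEigenvalue_of_hasEigenvector
    ⟨Module.End.mem_eigenspace_iff.mpr ((toLin'_apply A x).trans hAx), hx⟩

end AnyDimension

section CrossProduct

variable {R : Type*} [CommRing R]

theorem cross_dot_cross_self_of_dotProduct_eq_zero {u v : Fin 3 → R} (huv : u ⬝ᵥ v = 0) :
    u ⨯₃ v ⬝ᵥ u ⨯₃ v = (u ⬝ᵥ u) * (v ⬝ᵥ v) := by
  rw [cross_dot_cross, huv, zero_mul, sub_zero]

theorem auxiliaryTensor_mulVec_cross (u v : Fin 3 → R) :
    auxiliaryTensor u v *ᵥ (u ⨯₃ v) = (-(v ⬝ᵥ v)) • (u ⨯₃ v) :=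
  auxiliaryTensor_mulVec_of_dotProduct_eq_zero (dot_self_cross u v) (dot_cross_self u v)

theorem auxiliary_tensor_eigenstructure_general
    (u v : Fin 3 → R) (hu : u ⬝ᵥ u = 1) (hv : 2 * (v ⬝ᵥ v) ≠ 0) (huv : u ⬝ᵥ v = 0) :
    (auxiliaryTensor u v).IsSymm ∧ (auxiliaryTensor u v).trace = 0 ∧
    auxiliaryTensor u v *ᵥ v = (v ⬝ᵥ v) • v ∧
    auxiliaryTensor u v *ᵥ (u ⨯₃ v) = (-(v ⬝ᵥ v)) • (u ⨯₃ v) ∧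
    auxiliaryTensor u v *ᵥ u = 0 ∧
    (v ⬝ᵥ v ≠ -(v ⬝ᵥ v) ∧ v ⬝ᵥ v ≠ 0 ∧ -(v ⬝ᵥ v) ≠ 0 ∧
      Module.End.HasEigenvalue (toLin' (auxiliaryTensor u v)) (v ⬝ᵥ v) ∧
      Module.End.HasEigenvalue (toLin' (auxiliaryTensor u v)) (-(v ⬝ᵥ v)) ∧
      Module.End.HasEigenvalue (toLin' (auxiliaryTensor u v)) 0) := by
  have trace_eq_zero : (auxiliaryTensor u v).trace = 0 := by
    rw [trace_auxiliaryTensor hu, Fintype.card_fin, Nat.cast_ofNat, sub_self, zero_mul]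
  have : Nontrivial R := nontrivial_of_ne _ _ hv
  have ne_neg : v ⬝ᵥ v ≠ -(v ⬝ᵥ v) := by rwa [Ne, eq_neg_iff_add_eq_zero, ← two_mul]
  have normSq_ne_zero : v ⬝ᵥ v ≠ 0 := right_ne_zero_of_mul hv
  have v_ne_zero : v ≠ 0 := ne_zero_of_dotProduct_self_ne_zero normSq_ne_zero
  have cross_ne_zero : u ⨯₃ v ≠ 0 := by
    apply ne_zero_of_dotProduct_self_ne_zero
    rwa [cross_dot_cross_self_of_dotProduct_eq_zero huv, hu, one_mul]
  have u_ne_zero : u ≠ 0 := ne_zero_of_dotProduct_self_ne_zero (hu ▸ one_ne_zero)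
  have mulVec_u := auxiliaryTensor_mulVec_left hu huv
  exact ⟨isSymm_auxiliaryTensor u v, trace_eq_zero, auxiliaryTensor_mulVec_right huv,
    auxiliaryTensor_mulVec_cross u v, mulVec_u, ne_neg, normSq_ne_zero,
    neg_ne_zero.mpr normSq_ne_zero,
    hasEigenvalue_toLin'_of_mulVec_eq_smul v_ne_zero (auxiliaryTensor_mulVec_right huv),
    hasEigenvalue_toLin'_of_mulVec_eq_smul cross_ne_zero (auxiliaryTensor_mulVec_cross u v),
    hasEigenvalue_toLin'_of_mulVec_eq_smul u_ne_zero (mulVec_u.trans (zero_smul R u).symm)⟩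

end CrossProduct

theorem auxiliary_tensor_eigenstructure (u v : Fin 3 → ℝ)
    (hu : u ⬝ᵥ u = 1) (hv : v ≠ 0) (horth : u ⬝ᵥ v = 0)
    (h A : Matrix (Fin 3) (Fin 3) ℝ)
    (hdef : h = (1 : Matrix (Fin 3) (Fin 3) ℝ) - vecMulVec u u)
    (hAdef : A = (2 : ℝ) • vecMulVec v v - (v ⬝ᵥ v) • h) :
    A.IsSymm ∧ A.trace = 0 ∧
    A.mulVec v = (v ⬝ᵥ v) • v ∧
    A.mulVec (crossProduct u v) = (-(v ⬝ᵥ v)) • (crossProduct u v) ∧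
    A.mulVec u = 0 ∧
    ((v ⬝ᵥ v) ≠ -(v ⬝ᵥ v) ∧ (v ⬝ᵥ v) ≠ 0 ∧ -(v ⬝ᵥ v) ≠ 0 ∧
      Module.End.HasEigenvalue (Matrix.toLin' A) (v ⬝ᵥ v) ∧
      Module.End.HasEigenvalue (Matrix.toLin' A) (-(v ⬝ᵥ v)) ∧
      Module.End.HasEigenvalue (Matrix.toLin' A) 0) := by
  subst hdef hAdef
  exact auxiliary_tensor_eigenstructure_general u v hu
    (mul_ne_zero two_ne_zero (dotProduct_self_eq_zero.not.mpr hv)) horth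
end

section
/- Let E be a real normed vector space, U ⊆ E an open set, and r, s, t : U → ℝ differentiable functions with 6·t(x)² = s(x)³ for all x ∈ U. Let p ∈ U with s(p) ≠ 0, and define α = r/3 + 2t/s on a neighborhood of p. Then α is differentiable at p and Dα(p) = (1/3)·( Dr(p) + (2/s(p))·Dt(p) ). -/
/-!
Differentiating `c * t ^ m = s ^ n` and multiplying by `s * t` turns both sides into multiples of
`s ^ n`; where `s ≠ 0` this leaves the logarithmic relation `m * s * dt = n * t * ds`, in which `c`
no longer appears. Hence `d(t / s) = (1 - m / n) / s * dt`, and `m = 2`, `n = 3` gives the factor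
`1 / 3`.
-/

open scoped Topology

section

variable {𝕜 E : Type*} [NontriviallyNormedField 𝕜] [NormedAddCommGroup E] [NormedSpace 𝕜 E]
  {r s t : E → 𝕜} {r' s' t' : E →L[𝕜] 𝕜} {p : E} {c : 𝕜} {m n : ℕ}

theorem hasFDerivAt_div (ht : HasFDerivAt t t' p) (hs : HasFDerivAt s s' p) (hsp : s p ≠ 0) :
    HasFDerivAt (fun x => t x / s x) ((s p ^ 2)⁻¹ • (s p • t' - t p • s')) p := by
  simp only [div_eq_mul_inv]
  refine (ht.mul ((hasDerivAt_inv hsp).comp_hasFDerivAt p hs)).congr_fderiv ?_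
  ext v
  simp only [Function.comp_apply, add_apply, sub_apply, smul_apply, smul_eq_mul]
  field_simp
  ring

theorem smul_fderiv_eq_of_const_mul_pow_eventuallyEq_pow
    (ht : HasFDerivAt t t' p) (hs : HasFDerivAt s s' p)
    (h : ∀ᶠ x in 𝓝 p, c * t x ^ m = s x ^ n) (hsp : s p ≠ 0) :
    (m * s p) • t' = (n * t p) • s' := by
  have hderiv : c • (m * t p ^ (m - 1)) • t' = (n * s p ^ (n - 1)) • s' := by
    simpa only [nsmul_eq_mul] using
      ((ht.pow m).const_mul c).unique ((hs.pow n).congr_of_eventuallyEq h)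
  have natCast_mul_pow (k : ℕ) (a : 𝕜) : k * a ^ (k - 1) * a = k * a ^ k := by
    cases k <;> simp [pow_succ, mul_assoc]
  ext v
  have hv : c * (m * t p ^ (m - 1) * t' v) = n * s p ^ (n - 1) * s' v :=
    DFunLike.congr_fun hderiv v
  refine mul_left_cancel₀ (pow_ne_zero n hsp) ?_
  calc s p ^ n * (m * s p * t' v)
      = c * (m * t p ^ m) * s p * t' v := by rw [← h.self_of_nhds]; ring
    _ = c * (m * t p ^ (m - 1) * t' v) * t p * s p := by rw [← natCast_mul_pow]; ring
    _ = n * s p ^ (n - 1) * s p * t p * s' v := by rw [hv]; ring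
    _ = s p ^ n * (n * t p * s' v) := by rw [natCast_mul_pow]; ring

theorem hasFDerivAt_div_of_const_mul_pow_eventuallyEq_pow
    (ht : HasFDerivAt t t' p) (hs : HasFDerivAt s s' p)
    (h : ∀ᶠ x in 𝓝 p, c * t x ^ m = s x ^ n) (hsp : s p ≠ 0) (hn : (n : 𝕜) ≠ 0) :
    HasFDerivAt (fun x => t x / s x) (((1 - m / n) / s p) • t') p := by
  refine (hasFDerivAt_div ht hs hsp).congr_fderiv ?_
  ext v
  have hv : m * s p * t' v = n * t p * s' v :=
    DFunLike.congr_fun (smul_fderiv_eq_of_const_mul_pow_eventuallyEq_pow ht hs h hsp) v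
  simp only [smul_apply, sub_apply, smul_eq_mul]
  field_simp
  linear_combination hv

theorem simple_eigenvalue_differential_general
    (hr : HasFDerivAt r r' p) (hs : HasFDerivAt s s' p) (ht : HasFDerivAt t t' p)
    (hspec : ∀ᶠ x in 𝓝 p, 6 * t x ^ 2 = s x ^ 3) (hsp : s p ≠ 0) :
    HasFDerivAt (fun x => r x / 3 + 2 * t x / s x) ((1 / 3 : 𝕜) • (r' + (2 / s p) • t')) p := by
  have hthree : (3 : 𝕜) ≠ 0 := fun h3 => pow_ne_zero 3 hsp <| by
    rw [← hspec.self_of_nhds]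
    linear_combination 2 * t p ^ 2 * h3
  have hquot : HasFDerivAt (fun x => t x / s x) (((1 - (2 : ℕ) / (3 : ℕ)) / s p) • t') p :=
    hasFDerivAt_div_of_const_mul_pow_eventuallyEq_pow ht hs hspec hsp (mod_cast hthree)
  simp only [div_eq_inv_mul (r _), mul_div_assoc]
  refine ((hr.const_mul 3⁻¹).add (hquot.const_mul 2)).congr_fderiv ?_
  ext v
  simp only [add_apply, smul_apply, smul_eq_mul]
  push_cast
  field_simp
  ring

end

theorem simple_eigenvalue_differential {E : Type*} [NormedAddCommGroup E] [NormedSpace ℝ E]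
    (U : Set E) (hU : IsOpen U) (r s t : E → ℝ)
    (hr : ∀ x ∈ U, DifferentiableAt ℝ r x)
    (hs : ∀ x ∈ U, DifferentiableAt ℝ s x)
    (ht : ∀ x ∈ U, DifferentiableAt ℝ t x)
    (hspec : ∀ x ∈ U, 6 * t x ^ 2 = s x ^ 3)
    (p : E) (hp : p ∈ U) (hsp : s p ≠ 0)
    (α : E → ℝ) (hα : α = fun x => r x / 3 + 2 * t x / s x) :
    DifferentiableAt ℝ α p ∧
    fderiv ℝ α p = (1 / 3 : ℝ) • (fderiv ℝ r p + (2 / s p) • fderiv ℝ t p) := by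
  subst hα
  have hspec' : ∀ᶠ x in 𝓝 p, 6 * t x ^ 2 = s x ^ 3 :=
    Filter.eventually_of_mem (hU.mem_nhds hp) hspec
  have hasFDerivAt_α := simple_eigenvalue_differential_general
    (hr p hp).hasFDerivAt (hs p hp).hasFDerivAt (ht p hp).hasFDerivAt hspec' hsp
  exact ⟨hasFDerivAt_α.differentiableAt, hasFDerivAt_α.fderiv⟩
end
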